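/- Let Γ be a 3-homogeneous access structure on 7 players satisfying monotonicity, no-cloning and no-redundancy, and suppose ψ is a pure QSS state for Γ. Then every 2-element subset of {1,…,7} is contained in at least one set of Γ_min. -/

import Mathlib

open Finset

/-- Monotonicity of an access structure on `n` players (players = `Fin n`). -/
def Monotonic {n : ℕ} (Γ : Finset (Fin n) → Prop) : Prop :=
  ∀ A B : Finset (Fin n), Γ A → A ⊆ B → Γ B

/-- No-cloning: a set is authorized iff its complement is not. -/
def NoCloning {n : ℕ} (Γ : Finset (Fin n) → Prop) : Prop :=
  ∀ A : Finset (Fin n), Γ A ↔ ¬ Γ Aᶜ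

/-- `A` is a minimal authorized set of `Γ`. -/
def IsMinimal {n : ℕ} (Γ : Finset (Fin n) → Prop) (A : Finset (Fin n)) : Prop :=
  Γ A ∧ ∀ B : Finset (Fin n), B ⊂ A → ¬ Γ B

/-- No-redundancy: every player lies in some minimal authorized set. -/
def NoRedundancy {n : ℕ} (Γ : Finset (Fin n) → Prop) : Prop :=
  ∀ i : Fin n, ∃ A : Finset (Fin n), IsMinimal Γ A ∧ i ∈ A

noncomputable section

/-- Combine an assignment on `A` and one on `Aᶜ` into a full bit string. -/
def glue {m : ℕ} (A : Finset (Fin m)) (u : {x // x ∈ A} → Fin 2)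
    (w : {x // x ∈ Aᶜ} → Fin 2) : Fin m → Fin 2 :=
  fun x => if h : x ∈ A then u ⟨x, h⟩ else w ⟨x, Finset.mem_compl.mpr h⟩

/-- Reduced density matrix of the pure state `ψ` on the qubit positions in `A`:
the partial trace over the positions outside `A` of `ψψ†`. -/
def reducedDensity {m : ℕ} (ψ : (Fin m → Fin 2) → ℂ) (A : Finset (Fin m)) :
    Matrix ({x // x ∈ A} → Fin 2) ({x // x ∈ A} → Fin 2) ℂ :=
  fun u v => ∑ w : {x // x ∈ Aᶜ} → Fin 2,
    ψ (glue A u w) * (starRingEnd ℂ) (ψ (glue A v w))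

/-- The reduction of `ψ` to `A` is maximally mixed, i.e. equals `2^{-|A|} · I`. -/
def MaximallyMixed {m : ℕ} (ψ : (Fin m → Fin 2) → ℂ) (A : Finset (Fin m)) : Prop :=
  reducedDensity ψ A =
    ((2 : ℂ) ^ A.card)⁻¹ •
      (1 : Matrix ({x // x ∈ A} → Fin 2) ({x // x ∈ A} → Fin 2) ℂ)

open Classical in
/-- Von Neumann entropy (natural logarithm): sum of `-λ log λ` over the eigenvalues. -/
def vnEntropy {ι : Type} [Fintype ι] [DecidableEq ι] (ρ : Matrix ι ι ℂ) : ℝ :=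
  if h : ρ.IsHermitian then ∑ i, Real.negMulLog (h.eigenvalues i) else 0

/-- Entropy of the reduction of `ψ` to the set `A` of qubit positions. -/
def Sent {m : ℕ} (ψ : (Fin m → Fin 2) → ℂ) (A : Finset (Fin m)) : ℝ :=
  vnEntropy (reducedDensity ψ A)

/-- The qubit positions (in `{0,1,…,n} = Fin (n+1)`, where `0` is the reference qubit)
of a set of players `A ⊆ Fin n`: player `i` holds position `i.succ`. -/
def posOf {n : ℕ} (A : Finset (Fin n)) : Finset (Fin (n + 1)) := A.image Fin.succ

/-- `ψ` is a pure QSS state for the access structure `Γ`: a normalized pure state of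
`n+1` qubits (position `0` being the reference qubit `R`) satisfying Recoverability
`S(R) + S(A) - S(R ∪ A) = 2 log 2` for authorized `A` and Secrecy
`S(R) + S(B) - S(R ∪ B) = 0` for unauthorized `B`. -/
structure IsPureQSSState {n : ℕ} (Γ : Finset (Fin n) → Prop)
    (ψ : (Fin (n + 1) → Fin 2) → ℂ) : Prop where
  normalized : ∑ x : Fin (n + 1) → Fin 2, ‖ψ x‖ ^ 2 = 1
  recover : ∀ A : Finset (Fin n), Γ A →
    Sent ψ {0} + Sent ψ (posOf A) - Sent ψ (insert 0 (posOf A)) = 2 * Real.log 2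
  secrecy : ∀ B : Finset (Fin n), ¬ Γ B →
    Sent ψ {0} + Sent ψ (posOf B) - Sent ψ (insert 0 (posOf B)) = 0

end

/-!
Subadditivity of the von Neumann entropy, with its equality case, comes from Klein's inequality.
For a pure state `S(R ∪ A) = S(Aᶜ)`, so recoverability and secrecy together say
`S(Aᶜ) = S(A) - log 2` for authorized `A`. If two authorized sets `A` and `B` meet in a single
player `j`, subadditivity applied to `A = {j} ∪ (A \ {j})` and to `{j} ∪ Aᶜ` is therefore tight:
`S(j) = log 2`, and `j` is uncorrelated with `Aᶜ`.

Suppose no minimal set contains both `p` and `q`. As all minimal sets are triples, they must include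
`abp`, `cdp`, `acq`, `bdq`, `adr`, `bcr` for some naming of the other players: a complete
quadrangle `abcd` with diagonal points `p`, `q`, `r`. No-cloning also forces `bcd` and `acd` to be
authorized. By the above `S(pqr) = 3 log 2`, hence `S(R ∪ abcd) = 3 log 2`, whereas
`S(R ∪ bcd) = S(bcd) - log 2 ≤ 2 log 2` and `S(a) ≤ log 2`. So `a` is uncorrelated with `R ∪ bcd`,
and it can be dropped from the authorized set `acd`: the pair `cd` is authorized although it is
disjoint from `abp`.
-/

open Matrix
open scoped ComplexOrder Kronecker

section ClassicalEntropy

open Real InformationTheory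

theorem mul_klFun_div {p q : ℝ} (h : q = 0 → p = 0) :
    q * klFun (p / q) = -negMulLog p - p * log q + q - p := by
  rcases eq_or_ne q 0 with rfl | hq
  · simp [h rfl]
  rcases eq_or_ne p 0 with rfl | hp
  · simp [klFun_zero]
  rw [klFun_apply, negMulLog, log_div hp hq]
  field

variable {α β : Type*} [Fintype α] [Fintype β] {r : α × β → ℝ}

theorem eq_zero_of_marginal_mul_eq_zero (hr : ∀ x, 0 ≤ r x) (x : α × β)
    (hx : (∑ l, r (x.1, l)) * ∑ k, r (k, x.2) = 0) : r x = 0 := by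
  rcases mul_eq_zero.1 hx with h | h
  · exact (sum_eq_zero_iff_of_nonneg fun l _ => hr (x.1, l)).1 h x.2 (mem_univ _)
  · exact (sum_eq_zero_iff_of_nonneg fun k _ => hr (k, x.2)).1 h x.1 (mem_univ _)

theorem sum_marginal_mul_marginal (hsum : ∑ x, r x = 1) :
    ∑ x : α × β, (∑ l, r (x.1, l)) * ∑ k, r (k, x.2) = 1 := by
  simp only [Fintype.sum_prod_type, ← Fintype.sum_mul_sum]
  rw [← Fintype.sum_prod_type, ← Fintype.sum_prod_type_right, hsum, one_mul]

theorem neg_sum_mul_log_marginal_mul_marginal (hr : ∀ x, 0 ≤ r x) :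
    -∑ x : α × β, r x * log ((∑ l, r (x.1, l)) * ∑ k, r (k, x.2)) =
      ∑ k, negMulLog (∑ l, r (k, l)) + ∑ l, negMulLog (∑ k, r (k, l)) := by
  have hlog (x : α × β) : r x * log ((∑ l, r (x.1, l)) * ∑ k, r (k, x.2)) =
      r x * log (∑ l, r (x.1, l)) + r x * log (∑ k, r (k, x.2)) := by
    by_cases hx : (∑ l, r (x.1, l)) * ∑ k, r (k, x.2) = 0
    · simp [eq_zero_of_marginal_mul_eq_zero hr x hx]
    · rw [log_mul (left_ne_zero_of_mul hx) (right_ne_zero_of_mul hx), mul_add]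
  simp only [hlog, sum_add_distrib, neg_add, negMulLog, neg_mul, sum_neg_distrib]
  congr 2
  · simp only [Fintype.sum_prod_type, ← sum_mul]
  · simp only [Fintype.sum_prod_type_right, ← sum_mul]

end ClassicalEntropy

section Spectrum

open Real

theorem isHermitian_diagonal_ofReal {ι : Type*} [DecidableEq ι] (p : ι → ℝ) :
    (diagonal fun i => (p i : ℂ)).IsHermitian :=
  isHermitian_diagonal_of_self_adjoint _ (funext fun i => Complex.conj_ofReal (p i))

variable {ι κ : Type} [Fintype ι] [DecidableEq ι] [Fintype κ] [DecidableEq κ]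

theorem vnEntropy_eq_sum_roots_charpoly {ρ : Matrix ι ι ℂ} (hρ : ρ.IsHermitian) :
    vnEntropy ρ = (ρ.charpoly.roots.map fun z : ℂ => negMulLog z.re).sum := by
  rw [vnEntropy, dif_pos hρ, hρ.roots_charpoly_eq_eigenvalues, Multiset.map_map]
  rfl

theorem vnEntropy_diagonal (p : ι → ℝ) :
    vnEntropy (diagonal fun i => (p i : ℂ)) = ∑ i, negMulLog (p i) := by
  rw [vnEntropy_eq_sum_roots_charpoly (isHermitian_diagonal_ofReal p), charpoly_diagonal,
    Polynomial.roots_prod _ _ (by simp [prod_ne_zero_iff, Polynomial.X_sub_C_ne_zero])]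
  simp

theorem vnEntropy_conjTranspose_mul_mul {ρ U : Matrix ι ι ℂ} (hρ : ρ.IsHermitian)
    (hU : U ∈ unitaryGroup ι ℂ) : vnEntropy (Uᴴ * ρ * U) = vnEntropy ρ := by
  have hUU : U * Uᴴ = 1 := mem_unitaryGroup_iff.1 hU
  rw [vnEntropy_eq_sum_roots_charpoly (isHermitian_conjTranspose_mul_mul U hρ),
    vnEntropy_eq_sum_roots_charpoly hρ, mul_assoc, charpoly_mul_comm, mul_assoc, hUU, mul_one]

theorem vnEntropy_submatrix_equiv {ρ : Matrix ι ι ℂ} (hρ : ρ.IsHermitian) (e : κ ≃ ι) :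
    vnEntropy (ρ.submatrix e e) = vnEntropy ρ := by
  have hcharpoly : (ρ.submatrix e e).charpoly = ρ.charpoly := charpoly_reindex e.symm ρ
  rw [vnEntropy_eq_sum_roots_charpoly hρ, vnEntropy_eq_sum_roots_charpoly (hρ.submatrix e),
    hcharpoly]

theorem vnEntropy_transpose {ρ : Matrix ι ι ℂ} (hρ : ρ.IsHermitian) :
    vnEntropy ρᵀ = vnEntropy ρ := by
  rw [vnEntropy_eq_sum_roots_charpoly hρ, vnEntropy_eq_sum_roots_charpoly hρ.transpose,
    charpoly_transpose]

theorem vnEntropy_mul_conjTranspose_comm (M : Matrix ι κ ℂ) :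
    vnEntropy (M * Mᴴ) = vnEntropy (Mᴴ * M) := by
  rw [vnEntropy_eq_sum_roots_charpoly (isHermitian_mul_conjTranspose_self M),
    vnEntropy_eq_sum_roots_charpoly (isHermitian_conjTranspose_mul_self M)]
  have hsum := congrArg
    (fun f : Polynomial ℂ => (f.roots.map fun z : ℂ => negMulLog z.re).sum)
    (charpoly_mul_comm' M Mᴴ)
  simpa [Polynomial.roots_mul, (charpoly_monic _).ne_zero, Multiset.map_nsmul,
    Multiset.sum_nsmul] using hsum

theorem exists_unitary_conj_eq_diagonal {ρ : Matrix ι ι ℂ} (hρ : ρ.PosSemidef) :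
    ∃ U ∈ unitaryGroup ι ℂ, ∃ p : ι → ℝ, (∀ i, 0 ≤ p i) ∧
      Uᴴ * ρ * U = diagonal fun i => (p i : ℂ) := by
  refine ⟨hρ.1.eigenvectorUnitary, hρ.1.eigenvectorUnitary.2, hρ.1.eigenvalues,
    hρ.eigenvalues_nonneg, ?_⟩
  have h := hρ.1.conjStarAlgAut_star_eigenvectorUnitary
  rw [Unitary.conjStarAlgAut_apply] at h
  simpa [star_eq_conjTranspose, Function.comp_def] using h

end Spectrum

section Klein

open Real InformationTheory

variable {ι : Type} [Fintype ι]

/-- Klein's divergence `Tr ρ (log ρ - log σ)`, up to the difference of the traces of `σ` and `ρ`,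
of the states `ρ = U * diagonal p * Uᴴ` and `σ = diagonal q`, written as a sum of nonnegative
terms. A term with `q j = 0` has the junk value `0`, so this is only meaningful when the kernel of
`σ` is contained in that of `ρ`. -/
noncomputable def kleinDivergence (U : Matrix ι ι ℂ) (p q : ι → ℝ) : ℝ :=
  ∑ j, ∑ i, Complex.normSq (U j i) * (q j * klFun (p i / q j))

variable {U : Matrix ι ι ℂ} {p q : ι → ℝ}

theorem kleinDivergence_nonneg (hp : ∀ i, 0 ≤ p i) (hq : ∀ j, 0 ≤ q j) :
    0 ≤ kleinDivergence U p q :=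
  sum_nonneg fun j _ => sum_nonneg fun i _ => mul_nonneg (Complex.normSq_nonneg _) <|
    mul_nonneg (hq j) (klFun_nonneg (div_nonneg (hp i) (hq j)))

variable [DecidableEq ι]

theorem sum_normSq_row_of_mem_unitaryGroup (hU : U ∈ unitaryGroup ι ℂ) (j : ι) :
    ∑ i, Complex.normSq (U j i) = 1 := by
  have hjj := congrFun₂ (mem_unitaryGroup_iff.1 hU) j j
  simp only [mul_apply, star_apply, RCLike.star_def, Complex.mul_conj, one_apply_eq] at hjj
  exact_mod_cast hjj

theorem sum_normSq_col_of_mem_unitaryGroup (hU : U ∈ unitaryGroup ι ℂ) (i : ι) :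
    ∑ j, Complex.normSq (U j i) = 1 := by
  simpa [Complex.normSq_conj] using
    sum_normSq_row_of_mem_unitaryGroup (Unitary.star_mem hU) i

theorem mul_diagonal_mul_conjTranspose_apply_self (U : Matrix ι ι ℂ) (p : ι → ℝ) (j : ι) :
    (U * (diagonal fun i => (p i : ℂ)) * Uᴴ) j j =
      ((∑ i, Complex.normSq (U j i) * p i : ℝ) : ℂ) := by
  rw [mul_apply]
  push_cast
  refine sum_congr rfl fun i _ => ?_
  rw [mul_diagonal, conjTranspose_apply, mul_right_comm, RCLike.star_def, Complex.mul_conj]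

theorem kleinDivergence_eq (hU : U ∈ unitaryGroup ι ℂ)
    (hac : ∀ j i, q j = 0 → Complex.normSq (U j i) * p i = 0) (hsum : ∑ i, p i = ∑ j, q j) :
    kleinDivergence U p q =
      -∑ j, (∑ i, Complex.normSq (U j i) * p i) * log (q j) - ∑ i, negMulLog (p i) := by
  have hterm (j i : ι) : Complex.normSq (U j i) * (q j * klFun (p i / q j)) =
      -(Complex.normSq (U j i) * p i * log (q j)) - Complex.normSq (U j i) * negMulLog (p i)
        + Complex.normSq (U j i) * q j - Complex.normSq (U j i) * p i := by
    rcases eq_or_ne (Complex.normSq (U j i)) 0 with h0 | h0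
    · simp [h0]
    · rw [mul_klFun_div fun hqj => (mul_eq_zero.1 (hac j i hqj)).resolve_left h0]
      ring
  have hcol (f : ι → ℝ) : ∑ j, ∑ i, Complex.normSq (U j i) * f i = ∑ i, f i := by
    rw [sum_comm]
    simp only [← sum_mul, sum_normSq_col_of_mem_unitaryGroup hU, one_mul]
  simp only [kleinDivergence, hterm, sum_sub_distrib, sum_add_distrib, sum_neg_distrib, hcol]
  simp only [← sum_mul, sum_normSq_row_of_mem_unitaryGroup hU, one_mul, hsum]
  ring

theorem mul_diagonal_eq_diagonal_mul_of_kleinDivergence_eq_zero (hp : ∀ i, 0 ≤ p i)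
    (hq : ∀ j, 0 ≤ q j) (hac : ∀ j i, q j = 0 → Complex.normSq (U j i) * p i = 0)
    (h : kleinDivergence U p q = 0) :
    U * (diagonal fun i => (p i : ℂ)) = (diagonal fun j => (q j : ℂ)) * U := by
  have hnonneg (j i : ι) : 0 ≤ Complex.normSq (U j i) * (q j * klFun (p i / q j)) :=
    mul_nonneg (Complex.normSq_nonneg _) <|
      mul_nonneg (hq j) (klFun_nonneg (div_nonneg (hp i) (hq j)))
  ext j i
  rw [mul_diagonal, diagonal_mul]
  rcases eq_or_ne (U j i) 0 with h0 | h0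
  · simp [h0]
  have hU0 : Complex.normSq (U j i) ≠ 0 := mt Complex.normSq_eq_zero.1 h0
  have hterm : Complex.normSq (U j i) * (q j * klFun (p i / q j)) = 0 := by
    have hrow := (sum_eq_zero_iff_of_nonneg fun j _ => sum_nonneg fun i _ => hnonneg j i).1 h j
      (mem_univ j)
    exact (sum_eq_zero_iff_of_nonneg fun i _ => hnonneg j i).1 hrow i (mem_univ i)
  have hpq : p i = q j := by
    rcases mul_eq_zero.1 ((mul_eq_zero.1 hterm).resolve_left hU0) with hqj | hkl
    · rw [hqj, (mul_eq_zero.1 (hac j i hqj)).resolve_left hU0]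
    · exact eq_of_div_eq_one ((klFun_eq_zero_iff (div_nonneg (hp i) (hq j))).1 hkl)
  rw [hpq, mul_comm]

theorem exists_kleinDivergence_eq {ρ : Matrix ι ι ℂ} (hρ : ρ.PosSemidef)
    (hac : ∀ j, q j = 0 → ρ j j = 0) (htr : ρ.trace = ∑ j, (q j : ℂ)) :
    ∃ U ∈ unitaryGroup ι ℂ, ∃ p : ι → ℝ, (∀ i, 0 ≤ p i) ∧
      ρ = U * (diagonal fun i => (p i : ℂ)) * Uᴴ ∧
      (∀ j i, q j = 0 → Complex.normSq (U j i) * p i = 0) ∧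
      kleinDivergence U p q = -∑ j, (ρ j j).re * log (q j) - vnEntropy ρ := by
  obtain ⟨U, hU, p, hp, hdiag⟩ := exists_unitary_conj_eq_diagonal hρ
  have hUU : U * Uᴴ = 1 := mem_unitaryGroup_iff.1 hU
  have hρU : ρ = U * (diagonal fun i => (p i : ℂ)) * Uᴴ := by
    rw [← hdiag, mul_assoc, mul_assoc, mul_assoc, hUU, mul_one, ← mul_assoc, hUU, one_mul]
  have hent : vnEntropy ρ = ∑ i, negMulLog (p i) := by
    rw [← vnEntropy_conjTranspose_mul_mul hρ.1 hU, hdiag, vnEntropy_diagonal]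
  have hjj (j : ι) : ρ j j = ((∑ i, Complex.normSq (U j i) * p i : ℝ) : ℂ) :=
    (congrFun₂ hρU j j).trans (mul_diagonal_mul_conjTranspose_apply_self U p j)
  have hsum : ∑ i, p i = ∑ j, q j := by
    rw [← Complex.ofReal_inj, Complex.ofReal_sum, Complex.ofReal_sum, ← htr, hρU, trace_mul_comm,
      ← mul_assoc, ← star_eq_conjTranspose, mem_unitaryGroup_iff'.1 hU, one_mul, trace_diagonal]
  have hac' (j i : ι) (hqj : q j = 0) : Complex.normSq (U j i) * p i = 0 := by
    have hrow := hac j hqj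
    rw [hjj, Complex.ofReal_eq_zero, sum_eq_zero_iff_of_nonneg fun i _ =>
      mul_nonneg (Complex.normSq_nonneg _) (hp i)] at hrow
    exact hrow i (mem_univ i)
  refine ⟨U, hU, p, hp, hρU, hac', ?_⟩
  simp only [kleinDivergence_eq hU hac' hsum, hjj, Complex.ofReal_re, hent]

theorem vnEntropy_le_neg_sum_diag_mul_log {ρ : Matrix ι ι ℂ} (hρ : ρ.PosSemidef)
    (hq : ∀ j, 0 ≤ q j) (hac : ∀ j, q j = 0 → ρ j j = 0) (htr : ρ.trace = ∑ j, (q j : ℂ)) :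
    vnEntropy ρ ≤ -∑ j, (ρ j j).re * log (q j) := by
  obtain ⟨U, -, p, hp, -, -, hdiv⟩ := exists_kleinDivergence_eq hρ hac htr
  linarith [kleinDivergence_nonneg (U := U) hp hq]

theorem eq_diagonal_of_vnEntropy_eq_neg_sum_diag_mul_log {ρ : Matrix ι ι ℂ} (hρ : ρ.PosSemidef)
    (hq : ∀ j, 0 ≤ q j) (hac : ∀ j, q j = 0 → ρ j j = 0) (htr : ρ.trace = ∑ j, (q j : ℂ))
    (heq : vnEntropy ρ = -∑ j, (ρ j j).re * log (q j)) : ρ = diagonal fun j => (q j : ℂ) := by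
  obtain ⟨U, hU, p, hp, hρU, hac', hdiv⟩ := exists_kleinDivergence_eq hρ hac htr
  rw [heq, sub_self] at hdiv
  rw [hρU, mul_diagonal_eq_diagonal_mul_of_kleinDivergence_eq_zero hp hq hac' hdiv, mul_assoc,
    ← star_eq_conjTranspose, mem_unitaryGroup_iff.1 hU, mul_one]

theorem vnEntropy_le_log_card {ρ : Matrix ι ι ℂ} (hρ : ρ.PosSemidef) (htr : ρ.trace = 1) :
    vnEntropy ρ ≤ log (Fintype.card ι) := by
  have : Nonempty ι := by
    by_contra hempty
    simp [trace, not_nonempty_iff.1 hempty] at htr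
  have hre : ∑ j, (ρ j j).re = 1 := by simpa [trace] using congrArg Complex.re htr
  calc vnEntropy ρ ≤ -∑ j, (ρ j j).re * log (Fintype.card ι : ℝ)⁻¹ :=
        vnEntropy_le_neg_sum_diag_mul_log hρ (fun _ => by positivity) (by simp) (by simp [htr])
    _ = log (Fintype.card ι) := by rw [← sum_mul, hre, log_inv]; ring

end Klein

section PartialTrace

variable {ι κ : Type*}

/-- The partial trace of a matrix on `ι × κ` over the right factor. -/
def partialTraceRight [Fintype κ] (ρ : Matrix (ι × κ) (ι × κ) ℂ) : Matrix ι ι ℂ :=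
  ∑ k, ρ.submatrix (·, k) (·, k)

/-- The partial trace of a matrix on `ι × κ` over the left factor. -/
def partialTraceLeft [Fintype ι] (ρ : Matrix (ι × κ) (ι × κ) ℂ) : Matrix κ κ ℂ :=
  ∑ i, ρ.submatrix (i, ·) (i, ·)

theorem partialTraceRight_apply [Fintype κ] (ρ : Matrix (ι × κ) (ι × κ) ℂ) (i j : ι) :
    partialTraceRight ρ i j = ∑ k, ρ (i, k) (j, k) := by
  simp [partialTraceRight, Matrix.sum_apply]

theorem partialTraceLeft_apply [Fintype ι] (ρ : Matrix (ι × κ) (ι × κ) ℂ) (k l : κ) :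
    partialTraceLeft ρ k l = ∑ i, ρ (i, k) (i, l) := by
  simp [partialTraceLeft, Matrix.sum_apply]

theorem partialTraceRight_submatrix_swap [Fintype ι] (ρ : Matrix (ι × κ) (ι × κ) ℂ) :
    partialTraceRight (ρ.submatrix Prod.swap Prod.swap) = partialTraceLeft ρ :=
  rfl

theorem kronecker_submatrix_swap (V : Matrix ι ι ℂ) (W : Matrix κ κ ℂ) :
    (V ⊗ₖ W).submatrix Prod.swap Prod.swap = W ⊗ₖ V := by
  ext x y
  exact mul_comm _ _

theorem posSemidef_partialTraceRight [Fintype κ] {ρ : Matrix (ι × κ) (ι × κ) ℂ}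
    (hρ : ρ.PosSemidef) : (partialTraceRight ρ).PosSemidef :=
  posSemidef_sum _ fun _ _ => hρ.submatrix _

theorem posSemidef_partialTraceLeft [Fintype ι] {ρ : Matrix (ι × κ) (ι × κ) ℂ}
    (hρ : ρ.PosSemidef) : (partialTraceLeft ρ).PosSemidef :=
  posSemidef_sum _ fun _ _ => hρ.submatrix _

variable [Fintype ι] [Fintype κ]

theorem partialTraceRight_kronecker_one_mul [DecidableEq κ] (V : Matrix ι ι ℂ)
    (ρ : Matrix (ι × κ) (ι × κ) ℂ) :
    partialTraceRight ((V ⊗ₖ (1 : Matrix κ κ ℂ)) * ρ) = V * partialTraceRight ρ := by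
  ext i j
  simp only [partialTraceRight_apply, mul_apply, kroneckerMap_apply, one_apply, mul_ite, mul_one,
    mul_zero, ite_mul, zero_mul, Fintype.sum_prod_type, sum_ite_eq, mem_univ, if_true, mul_sum]
  exact sum_comm

theorem partialTraceRight_mul_kronecker_one [DecidableEq κ] (V : Matrix ι ι ℂ)
    (ρ : Matrix (ι × κ) (ι × κ) ℂ) :
    partialTraceRight (ρ * (V ⊗ₖ (1 : Matrix κ κ ℂ))) = partialTraceRight ρ * V := by
  ext i j
  simp only [partialTraceRight_apply, mul_apply, kroneckerMap_apply, one_apply, mul_ite, mul_one,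
    mul_zero, Fintype.sum_prod_type, sum_ite_eq', mem_univ, if_true, sum_mul]
  exact sum_comm

theorem partialTraceRight_one_kronecker_mul_comm [DecidableEq ι] (W : Matrix κ κ ℂ)
    (ρ : Matrix (ι × κ) (ι × κ) ℂ) :
    partialTraceRight (((1 : Matrix ι ι ℂ) ⊗ₖ W) * ρ) =
      partialTraceRight (ρ * ((1 : Matrix ι ι ℂ) ⊗ₖ W)) := by
  ext i j
  simp only [partialTraceRight_apply, mul_apply, kroneckerMap_apply, one_apply, ite_mul, mul_ite,
    one_mul, mul_zero, zero_mul, Fintype.sum_prod_type_right, sum_ite_eq, sum_ite_eq', mem_univ,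
    if_true]
  rw [sum_comm]
  simp only [mul_comm]

theorem partialTraceRight_kronecker_conj [DecidableEq κ] (V : Matrix ι ι ℂ) {W : Matrix κ κ ℂ}
    (hW : W ∈ unitaryGroup κ ℂ) (ρ : Matrix (ι × κ) (ι × κ) ℂ) :
    partialTraceRight ((V ⊗ₖ W)ᴴ * ρ * (V ⊗ₖ W)) = Vᴴ * partialTraceRight ρ * V := by
  classical
  have hWW : W * Wᴴ = 1 := mem_unitaryGroup_iff.1 hW
  have hfactor : (V ⊗ₖ W)ᴴ * ρ * (V ⊗ₖ W) =
      (Vᴴ ⊗ₖ (1 : Matrix κ κ ℂ)) * (((1 : Matrix ι ι ℂ) ⊗ₖ Wᴴ) *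
        (ρ * ((1 : Matrix ι ι ℂ) ⊗ₖ W))) * (V ⊗ₖ (1 : Matrix κ κ ℂ)) := by
    have hsplit : V ⊗ₖ W = ((1 : Matrix ι ι ℂ) ⊗ₖ W) * (V ⊗ₖ (1 : Matrix κ κ ℂ)) := by
      rw [← mul_kronecker_mul, one_mul, mul_one]
    simp only [hsplit, conjTranspose_mul, conjTranspose_kronecker, conjTranspose_one, mul_assoc]
  rw [hfactor, partialTraceRight_mul_kronecker_one, partialTraceRight_kronecker_one_mul,
    partialTraceRight_one_kronecker_mul_comm, mul_assoc ρ, ← mul_kronecker_mul, hWW, one_mul,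
    one_kronecker_one, mul_one]

theorem partialTraceLeft_kronecker_conj [DecidableEq ι] {V : Matrix ι ι ℂ}
    (hV : V ∈ unitaryGroup ι ℂ) (W : Matrix κ κ ℂ) (ρ : Matrix (ι × κ) (ι × κ) ℂ) :
    partialTraceLeft ((V ⊗ₖ W)ᴴ * ρ * (V ⊗ₖ W)) = Wᴴ * partialTraceLeft ρ * W := by
  have hswap : ((V ⊗ₖ W)ᴴ * ρ * (V ⊗ₖ W)).submatrix Prod.swap Prod.swap =
      (W ⊗ₖ V)ᴴ * ρ.submatrix Prod.swap Prod.swap * (W ⊗ₖ V) := by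
    simp only [← kronecker_submatrix_swap V W, conjTranspose_submatrix]
    rw [← submatrix_mul_equiv _ _ _ (Equiv.prodComm κ ι),
      ← submatrix_mul_equiv _ _ _ (Equiv.prodComm κ ι)]
    rfl
  rw [← partialTraceRight_submatrix_swap, hswap, partialTraceRight_kronecker_conj W hV,
    partialTraceRight_submatrix_swap]

end PartialTrace

theorem kronecker_conj_kronecker {ι κ : Type*} [Fintype ι] [Fintype κ] (V σ : Matrix ι ι ℂ)
    (W τ : Matrix κ κ ℂ) :
    (V ⊗ₖ W)ᴴ * (σ ⊗ₖ τ) * (V ⊗ₖ W) = (Vᴴ * σ * V) ⊗ₖ (Wᴴ * τ * W) := by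
  rw [conjTranspose_kronecker, ← mul_kronecker_mul, ← mul_kronecker_mul]

section UnitaryConjugation

variable {ι : Type*} [Fintype ι] [DecidableEq ι] {U : Matrix ι ι ℂ}

theorem trace_conjTranspose_mul_mul (hU : U ∈ unitaryGroup ι ℂ) (ρ : Matrix ι ι ℂ) :
    (Uᴴ * ρ * U).trace = ρ.trace := by
  have hUU : U * Uᴴ = 1 := mem_unitaryGroup_iff.1 hU
  rw [mul_assoc, trace_mul_comm, mul_assoc, hUU, mul_one]

theorem conjTranspose_mul_mul_injective (hU : U ∈ unitaryGroup ι ℂ) :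
    Function.Injective fun ρ => Uᴴ * ρ * U := by
  have hUU : U * Uᴴ = 1 := mem_unitaryGroup_iff.1 hU
  refine Function.LeftInverse.injective (g := fun ρ => U * ρ * Uᴴ) fun ρ => ?_
  simp only [mul_assoc, hUU, mul_one]
  rw [← mul_assoc, hUU, one_mul]

end UnitaryConjugation

section Subadditivity

open Real

theorem sum_re_diag_of_partialTraceRight_eq_diagonal {ι κ : Type*} [Fintype κ] [DecidableEq ι]
    {ρ : Matrix (ι × κ) (ι × κ) ℂ} {a : ι → ℝ}
    (ha : partialTraceRight ρ = diagonal fun i => (a i : ℂ)) (i : ι) :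
    ∑ k, (ρ (i, k) (i, k)).re = a i := by
  simpa [partialTraceRight_apply] using congrArg Complex.re (congrFun₂ ha i i)

theorem sum_re_diag_of_partialTraceLeft_eq_diagonal {ι κ : Type*} [Fintype ι] [DecidableEq κ]
    {ρ : Matrix (ι × κ) (ι × κ) ℂ} {b : κ → ℝ}
    (hb : partialTraceLeft ρ = diagonal fun k => (b k : ℂ)) (k : κ) :
    ∑ i, (ρ (i, k) (i, k)).re = b k := by
  simpa [partialTraceLeft_apply] using congrArg Complex.re (congrFun₂ hb k k)

variable {ι κ : Type} [Fintype ι] [Fintype κ] [DecidableEq ι] [DecidableEq κ]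
  {ρ : Matrix (ι × κ) (ι × κ) ℂ}

theorem vnEntropy_kronecker {σ : Matrix ι ι ℂ} {τ : Matrix κ κ ℂ} (hσ : σ.PosSemidef)
    (hτ : τ.PosSemidef) (htrσ : σ.trace = 1) (htrτ : τ.trace = 1) :
    vnEntropy (σ ⊗ₖ τ) = vnEntropy σ + vnEntropy τ := by
  obtain ⟨V, hV, a, -, ha⟩ := exists_unitary_conj_eq_diagonal hσ
  obtain ⟨W, hW, b, -, hb⟩ := exists_unitary_conj_eq_diagonal hτ
  have hasum : ∑ i, a i = 1 := by
    rw [← trace_conjTranspose_mul_mul hV, ha, trace_diagonal] at htrσ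
    exact_mod_cast htrσ
  have hbsum : ∑ k, b k = 1 := by
    rw [← trace_conjTranspose_mul_mul hW, hb, trace_diagonal] at htrτ
    exact_mod_cast htrτ
  have hprod : (V ⊗ₖ W)ᴴ * (σ ⊗ₖ τ) * (V ⊗ₖ W) =
      diagonal fun x => ((a x.1 * b x.2 : ℝ) : ℂ) := by
    rw [kronecker_conj_kronecker, ha, hb, diagonal_kronecker_diagonal]
    simp only [Complex.ofReal_mul]
  rw [← vnEntropy_conjTranspose_mul_mul (hσ.kronecker hτ).1 (kronecker_mem_unitary hV hW), hprod,
    ← vnEntropy_conjTranspose_mul_mul hσ.1 hV, ha, ← vnEntropy_conjTranspose_mul_mul hτ.1 hW, hb]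
  simp only [vnEntropy_diagonal, negMulLog_mul, Fintype.sum_prod_type, sum_add_distrib, ← sum_mul,
    ← mul_sum, hasum, hbsum, one_mul]

theorem vnEntropy_subadditive_of_partialTrace_eq_diagonal {a : ι → ℝ} {b : κ → ℝ}
    (hρ : ρ.PosSemidef) (htr : ρ.trace = 1)
    (ha : partialTraceRight ρ = diagonal fun i => (a i : ℂ))
    (hb : partialTraceLeft ρ = diagonal fun k => (b k : ℂ)) :
    vnEntropy ρ ≤ ∑ i, negMulLog (a i) + ∑ k, negMulLog (b k) ∧
      (vnEntropy ρ = ∑ i, negMulLog (a i) + ∑ k, negMulLog (b k) →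
        ρ = (diagonal fun i => (a i : ℂ)) ⊗ₖ (diagonal fun k => (b k : ℂ))) := by
  have hreal (x : ι × κ) : ((ρ x x).re : ℂ) = ρ x x := Complex.conj_eq_iff_re.1 (hρ.1.apply x x)
  have hnonneg (x : ι × κ) : 0 ≤ (ρ x x).re := (Complex.nonneg_iff.1 hρ.diag_nonneg).1
  have hsum : ∑ x, (ρ x x).re = 1 := by simpa [trace] using congrArg Complex.re htr
  have hac := eq_zero_of_marginal_mul_eq_zero hnonneg
  have htrace := sum_marginal_mul_marginal hsum
  have hcross := neg_sum_mul_log_marginal_mul_marginal hnonneg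
  simp only [sum_re_diag_of_partialTraceRight_eq_diagonal ha,
    sum_re_diag_of_partialTraceLeft_eq_diagonal hb] at hac htrace hcross
  have hq (x : ι × κ) : 0 ≤ a x.1 * b x.2 := by
    rw [← sum_re_diag_of_partialTraceRight_eq_diagonal ha,
      ← sum_re_diag_of_partialTraceLeft_eq_diagonal hb]
    exact mul_nonneg (sum_nonneg fun _ _ => hnonneg _) (sum_nonneg fun _ _ => hnonneg _)
  have hac' (x : ι × κ) (hx : a x.1 * b x.2 = 0) : ρ x x = 0 := by
    rw [← hreal, hac x hx, Complex.ofReal_zero]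
  have htr' : ρ.trace = ∑ x : ι × κ, ((a x.1 * b x.2 : ℝ) : ℂ) := by
    rw [htr, ← Complex.ofReal_sum, htrace, Complex.ofReal_one]
  rw [← hcross, diagonal_kronecker_diagonal]
  refine ⟨vnEntropy_le_neg_sum_diag_mul_log hρ hq hac' htr', fun heq => ?_⟩
  simpa using eq_diagonal_of_vnEntropy_eq_neg_sum_diag_mul_log hρ hq hac' htr' heq

theorem vnEntropy_subadditive (hρ : ρ.PosSemidef) (htr : ρ.trace = 1) :
    vnEntropy ρ ≤ vnEntropy (partialTraceRight ρ) + vnEntropy (partialTraceLeft ρ) ∧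
      (vnEntropy ρ = vnEntropy (partialTraceRight ρ) + vnEntropy (partialTraceLeft ρ) →
        ρ = partialTraceRight ρ ⊗ₖ partialTraceLeft ρ) := by
  have hR := posSemidef_partialTraceRight hρ
  have hL := posSemidef_partialTraceLeft hρ
  obtain ⟨V, hV, a, -, ha⟩ := exists_unitary_conj_eq_diagonal hR
  obtain ⟨W, hW, b, -, hb⟩ := exists_unitary_conj_eq_diagonal hL
  have hVW := kronecker_mem_unitary hV hW
  obtain ⟨hle, heq⟩ := vnEntropy_subadditive_of_partialTrace_eq_diagonal
    (hρ.conjTranspose_mul_mul_same (V ⊗ₖ W)) ((trace_conjTranspose_mul_mul hVW ρ).trans htr)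
    ((partialTraceRight_kronecker_conj V hW ρ).trans ha)
    ((partialTraceLeft_kronecker_conj hV W ρ).trans hb)
  rw [vnEntropy_conjTranspose_mul_mul hρ.1 hVW, ← vnEntropy_diagonal, ← vnEntropy_diagonal, ← ha,
    ← hb, vnEntropy_conjTranspose_mul_mul hR.1 hV, vnEntropy_conjTranspose_mul_mul hL.1 hW]
    at hle heq
  rw [← kronecker_conj_kronecker] at heq
  exact ⟨hle, fun h => conjTranspose_mul_mul_injective hVW (heq h)⟩

end Subadditivity

section ReducedStates

open Real Function

theorem updateFinset_comm {ι : Type*} {X : ι → Type*} [DecidableEq ι] {s t : Finset ι}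
    (hst : Disjoint s t) (x : ∀ i, X i) (u : ∀ i : s, X i) (v : ∀ i : t, X i) :
    updateFinset (updateFinset x s u) t v = updateFinset (updateFinset x t v) s u := by
  grind [updateFinset, disjoint_left]

variable {m : ℕ} {ψ : (Fin m → Fin 2) → ℂ} {A B C : Finset (Fin m)}

/-- The amplitudes of `ψ` arranged as a matrix with rows indexed by the bits in `A` and columns
by the remaining bits. -/
def amplitudeMatrix (ψ : (Fin m → Fin 2) → ℂ) (A : Finset (Fin m)) :
    Matrix ({x // x ∈ A} → Fin 2) ({x // x ∈ Aᶜ} → Fin 2) ℂ :=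
  of fun u w => ψ (glue A u w)

theorem reducedDensity_eq_mul_conjTranspose (ψ : (Fin m → Fin 2) → ℂ) (A : Finset (Fin m)) :
    reducedDensity ψ A = amplitudeMatrix ψ A * (amplitudeMatrix ψ A)ᴴ :=
  rfl

theorem posSemidef_reducedDensity (ψ : (Fin m → Fin 2) → ℂ) (A : Finset (Fin m)) :
    (reducedDensity ψ A).PosSemidef :=
  posSemidef_self_mul_conjTranspose _

theorem amplitudeMatrix_compl (ψ : (Fin m → Fin 2) → ℂ) (A : Finset (Fin m)) :
    amplitudeMatrix ψ Aᶜ = (amplitudeMatrix ψ A)ᵀ.submatrix id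
      ((Equiv.subtypeEquivRight fun x => by rw [compl_compl]).arrowCongr (Equiv.refl (Fin 2))) := by
  ext w u
  refine congrArg ψ (funext fun x => ?_)
  by_cases hx : x ∈ A
  · simp only [glue, mem_compl, hx, not_true_eq_false, dite_false, dite_true]
    rfl
  · simp [glue, hx]

theorem sent_compl (ψ : (Fin m → Fin 2) → ℂ) (A : Finset (Fin m)) :
    Sent ψ Aᶜ = Sent ψ A := by
  have htranspose : reducedDensity ψ Aᶜ = ((amplitudeMatrix ψ A)ᴴ * amplitudeMatrix ψ A)ᵀ := by
    rw [reducedDensity_eq_mul_conjTranspose, amplitudeMatrix_compl, conjTranspose_submatrix,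
      submatrix_mul_equiv, submatrix_id_id, transpose_mul]
    rfl
  rw [Sent, htranspose, vnEntropy_transpose (isHermitian_conjTranspose_mul_self _),
    ← vnEntropy_mul_conjTranspose_comm, Sent, reducedDensity_eq_mul_conjTranspose]

/-- The reduced density matrix on `A` as a function of two full bit strings, of which only the
bits in `A` matter. Unlike `reducedDensity`, its type does not depend on `A`. -/
def reducedKernel (ψ : (Fin m → Fin 2) → ℂ) (A : Finset (Fin m)) (x y : Fin m → Fin 2) : ℂ :=
  reducedDensity ψ A (A.restrict x) (A.restrict y)

theorem glue_restrict (A : Finset (Fin m)) (x : Fin m → Fin 2) (w : {i // i ∈ Aᶜ} → Fin 2) :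
    glue A (A.restrict x) w = updateFinset x Aᶜ w := by
  funext i
  by_cases hi : i ∈ A <;> simp [glue, updateFinset, hi]

theorem reducedKernel_eq_sum (ψ : (Fin m → Fin 2) → ℂ) (A : Finset (Fin m))
    (x y : Fin m → Fin 2) :
    reducedKernel ψ A x y = ∑ w : {i // i ∈ Aᶜ} → Fin 2,
      ψ (updateFinset x Aᶜ w) * starRingEnd ℂ (ψ (updateFinset y Aᶜ w)) := by
  simp only [reducedKernel, reducedDensity, glue_restrict]

theorem sum_updateFinset_union (hAB : Disjoint A B)
    (F : (Fin m → Fin 2) → (Fin m → Fin 2) → ℂ) (x y : Fin m → Fin 2) :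
    ∑ w : {i // i ∈ A ∪ B} → Fin 2, F (updateFinset x (A ∪ B) w) (updateFinset y (A ∪ B) w) =
      ∑ u : {i // i ∈ A} → Fin 2, ∑ v : {i // i ∈ B} → Fin 2,
        F (updateFinset (updateFinset x A u) B v) (updateFinset (updateFinset y A u) B v) := by
  rw [← Fintype.sum_prod_type', ← (Equiv.piFinsetUnion (fun _ => Fin 2) hAB).sum_comp]
  simp only [updateFinset_updateFinset hAB]

theorem reducedKernel_updateFinset (hAC : Disjoint A C) (x y : Fin m → Fin 2)
    (c d : {i // i ∈ C} → Fin 2) :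
    reducedKernel ψ A (updateFinset x C c) (updateFinset y C d) = reducedKernel ψ A x y := by
  have hrestrict (x : Fin m → Fin 2) (c : {i // i ∈ C} → Fin 2) :
      A.restrict (updateFinset x C c) = A.restrict x := by
    funext i
    simp [updateFinset, disjoint_left.1 hAC i.2]
  rw [reducedKernel, hrestrict, hrestrict, reducedKernel]

theorem sum_reducedKernel_union (hAC : Disjoint A C) (x y : Fin m → Fin 2) :
    ∑ c : {i // i ∈ C} → Fin 2, reducedKernel ψ (A ∪ C) (updateFinset x C c) (updateFinset y C c) =
      reducedKernel ψ A x y := by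
  have hcompl : Aᶜ = C ∪ (A ∪ C)ᶜ := by
    rw [compl_union, union_inter_distrib_left, union_compl, inter_univ,
      union_eq_right.2 (subset_compl_iff_disjoint_left.2 hAC)]
  have hdisj : Disjoint C (A ∪ C)ᶜ := disjoint_compl_right.mono_left subset_union_right
  simp only [reducedKernel_eq_sum]
  rw [hcompl]
  exact (sum_updateFinset_union hdisj (fun x y => ψ x * starRingEnd ℂ (ψ y)) x y).symm

theorem reducedDensity_eq_reducedKernel (ψ : (Fin m → Fin 2) → ℂ) (A : Finset (Fin m))
    (x y : Fin m → Fin 2) (u v : {i // i ∈ A} → Fin 2) :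
    reducedDensity ψ A u v = reducedKernel ψ A (updateFinset x A u) (updateFinset y A v) := by
  rw [reducedKernel, restrict_updateFinset, restrict_updateFinset]

theorem reducedKernel_empty (ψ : (Fin m → Fin 2) → ℂ) (x y : Fin m → Fin 2) :
    reducedKernel ψ ∅ x y = ((∑ z, ‖ψ z‖ ^ 2 : ℝ) : ℂ) := by
  rw [reducedKernel_eq_sum, compl_empty, Complex.ofReal_sum]
  refine Fintype.sum_equiv
    ((Equiv.subtypeUnivEquiv mem_univ).arrowCongr (Equiv.refl (Fin 2))) _ _ fun w => ?_
  rw [updateFinset_univ, updateFinset_univ, Complex.mul_conj, Complex.normSq_eq_norm_sq]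
  rfl

theorem trace_reducedDensity (hψ : ∑ x, ‖ψ x‖ ^ 2 = 1) (A : Finset (Fin m)) :
    (reducedDensity ψ A).trace = 1 := by
  have htrace := sum_reducedKernel_union (ψ := ψ) (disjoint_empty_left A) 0 0
  rw [reducedKernel_empty, hψ, Complex.ofReal_one, empty_union] at htrace
  simp only [← reducedDensity_eq_reducedKernel] at htrace
  exact htrace

/-- The reduced density matrix on `A ∪ B`, for disjoint `A` and `B`, as a matrix on the tensor
product of the qubits in `A` with those in `B`. -/
def jointDensity (ψ : (Fin m → Fin 2) → ℂ) (hAB : Disjoint A B) :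
    Matrix (({x // x ∈ A} → Fin 2) × ({x // x ∈ B} → Fin 2))
      (({x // x ∈ A} → Fin 2) × ({x // x ∈ B} → Fin 2)) ℂ :=
  (reducedDensity ψ (A ∪ B)).submatrix (Equiv.piFinsetUnion (fun _ => Fin 2) hAB)
    (Equiv.piFinsetUnion (fun _ => Fin 2) hAB)

theorem posSemidef_jointDensity (ψ : (Fin m → Fin 2) → ℂ) (hAB : Disjoint A B) :
    (jointDensity ψ hAB).PosSemidef :=
  (posSemidef_reducedDensity ψ (A ∪ B)).submatrix _

theorem jointDensity_apply (hAB : Disjoint A B) (x y : Fin m → Fin 2)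
    (u u' : {i // i ∈ A} → Fin 2) (v v' : {i // i ∈ B} → Fin 2) :
    jointDensity ψ hAB (u, v) (u', v') = reducedKernel ψ (A ∪ B)
      (updateFinset (updateFinset x A u) B v) (updateFinset (updateFinset y A u') B v') := by
  rw [updateFinset_updateFinset hAB, updateFinset_updateFinset hAB,
    ← reducedDensity_eq_reducedKernel]
  rfl

theorem partialTraceRight_jointDensity (hAB : Disjoint A B) :
    partialTraceRight (jointDensity ψ hAB) = reducedDensity ψ A := by
  ext u u'
  simp only [partialTraceRight_apply, jointDensity_apply hAB 0 0, sum_reducedKernel_union hAB,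
    ← reducedDensity_eq_reducedKernel]

theorem partialTraceLeft_jointDensity (hAB : Disjoint A B) :
    partialTraceLeft (jointDensity ψ hAB) = reducedDensity ψ B := by
  ext v v'
  simp only [partialTraceLeft_apply, jointDensity_apply hAB 0 0, updateFinset_comm hAB,
    union_comm A B, sum_reducedKernel_union hAB.symm, ← reducedDensity_eq_reducedKernel]

/-- The reduced state on `A ∪ B` is the tensor product of those on `A` and on `B`. -/
def Factorizes (ψ : (Fin m → Fin 2) → ℂ) (A B : Finset (Fin m)) : Prop :=
  ∀ x y, reducedKernel ψ (A ∪ B) x y = reducedKernel ψ A x y * reducedKernel ψ B x y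

theorem Factorizes.mono_right (h : Factorizes ψ A B) (hAB : Disjoint A B) (hCB : C ⊆ B) :
    Factorizes ψ A C := by
  intro x y
  have hA : Disjoint A (B \ C) := hAB.mono_right sdiff_subset
  have hunion : A ∪ C ∪ B \ C = A ∪ B := by rw [union_assoc, union_sdiff_of_subset hCB]
  rw [← sum_reducedKernel_union (disjoint_union_left.2 ⟨hA, disjoint_sdiff⟩) x y, hunion,
    ← sum_reducedKernel_union (A := C) disjoint_sdiff x y, union_sdiff_of_subset hCB, mul_sum]
  exact sum_congr rfl fun c _ => by rw [h, reducedKernel_updateFinset hA]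

theorem factorizes_iff_jointDensity_eq (hAB : Disjoint A B) :
    Factorizes ψ A B ↔ jointDensity ψ hAB = reducedDensity ψ A ⊗ₖ reducedDensity ψ B := by
  constructor
  · intro h
    ext ⟨u, v⟩ ⟨u', v'⟩
    rw [jointDensity_apply hAB 0 0, h, reducedKernel_updateFinset hAB, updateFinset_comm hAB,
      updateFinset_comm hAB, reducedKernel_updateFinset hAB.symm, kroneckerMap_apply,
      ← reducedDensity_eq_reducedKernel, ← reducedDensity_eq_reducedKernel]
  · intro h x y
    have hentry := congrFun₂ h (A.restrict x, B.restrict x) (A.restrict y, B.restrict y)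
    rwa [jointDensity_apply hAB x y, updateFinset_restrict, updateFinset_restrict,
      updateFinset_restrict, updateFinset_restrict] at hentry

theorem sent_le_card_mul_log_two (hψ : ∑ x, ‖ψ x‖ ^ 2 = 1) (A : Finset (Fin m)) :
    Sent ψ A ≤ A.card * log 2 := by
  simpa [Sent] using
    vnEntropy_le_log_card (posSemidef_reducedDensity ψ A) (trace_reducedDensity hψ A)

theorem vnEntropy_jointDensity (hAB : Disjoint A B) :
    vnEntropy (jointDensity ψ hAB) = Sent ψ (A ∪ B) :=
  vnEntropy_submatrix_equiv (posSemidef_reducedDensity ψ (A ∪ B)).1 _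

theorem trace_jointDensity (hψ : ∑ x, ‖ψ x‖ ^ 2 = 1) (hAB : Disjoint A B) :
    (jointDensity ψ hAB).trace = 1 := by
  rw [← trace_reducedDensity hψ (A ∪ B)]
  exact (Equiv.piFinsetUnion (fun _ => Fin 2) hAB).sum_comp fun u => reducedDensity ψ (A ∪ B) u u

theorem sent_union_le (hψ : ∑ x, ‖ψ x‖ ^ 2 = 1) (hAB : Disjoint A B) :
    Sent ψ (A ∪ B) ≤ Sent ψ A + Sent ψ B := by
  have h := (vnEntropy_subadditive (posSemidef_jointDensity ψ hAB)
    (trace_jointDensity hψ hAB)).1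
  rwa [vnEntropy_jointDensity, partialTraceRight_jointDensity, partialTraceLeft_jointDensity] at h

theorem sent_union_eq_add_iff (hψ : ∑ x, ‖ψ x‖ ^ 2 = 1) (hAB : Disjoint A B) :
    Sent ψ (A ∪ B) = Sent ψ A + Sent ψ B ↔ Factorizes ψ A B := by
  rw [factorizes_iff_jointDensity_eq hAB, ← vnEntropy_jointDensity hAB]
  constructor
  · have h := (vnEntropy_subadditive (posSemidef_jointDensity ψ hAB)
      (trace_jointDensity hψ hAB)).2
    rwa [partialTraceRight_jointDensity, partialTraceLeft_jointDensity] at h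
  · intro h
    rw [h]
    exact vnEntropy_kronecker (posSemidef_reducedDensity ψ A) (posSemidef_reducedDensity ψ B)
      (trace_reducedDensity hψ A) (trace_reducedDensity hψ B)

end ReducedStates

section AccessStructures

variable {n : ℕ} {Γ : Finset (Fin n) → Prop} {A B : Finset (Fin n)}

theorem inter_nonempty_of_authorized (hmono : Monotonic Γ) (hnc : NoCloning Γ) (hA : Γ A)
    (hB : Γ B) : (A ∩ B).Nonempty := by
  by_contra hAB
  have hsub : B ⊆ Aᶜ := subset_compl_iff_disjoint_left.2
    (disjoint_iff_inter_eq_empty.2 (not_nonempty_iff_eq_empty.1 hAB))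
  exact (hnc A).1 hA (hmono B Aᶜ hB hsub)

theorem exists_isMinimal_subset (hA : Γ A) : ∃ B ⊆ A, IsMinimal Γ B := by
  obtain ⟨B, hBA, hB⟩ := exists_minimal_le_of_wellFoundedLT Γ A hA
  exact ⟨B, hBA, hB.prop, fun C hCB hC => hB.not_lt hC hCB⟩

theorem exists_isMinimal_inter_eq_singleton (hmono : Monotonic Γ) (hnc : NoCloning Γ)
    (hA : IsMinimal Γ A) {i : Fin n} (hi : i ∈ A) : ∃ B, IsMinimal Γ B ∧ A ∩ B = {i} := by
  have hcompl : Γ (A.erase i)ᶜ := by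
    by_contra h
    exact hA.2 _ (erase_ssubset hi) ((hnc _).2 h)
  obtain ⟨B, hBsub, hB⟩ := exists_isMinimal_subset hcompl
  refine ⟨B, hB, (inter_nonempty_of_authorized hmono hnc hA.1 hB.1).subset_singleton_iff.1 ?_⟩
  grind [mem_compl]

theorem authorized_of_authorized_insert (hmono : Monotonic Γ) (hnc : NoCloning Γ) {p q : Fin n}
    (hpq : ∀ M, IsMinimal Γ M → p ∈ M → q ∉ M) (hp : Γ (insert p A)) (hq : Γ (insert q A)) :
    Γ A := by
  by_contra hA
  have hcompl : Γ Aᶜ := by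
    by_contra h
    exact hA ((hnc A).2 h)
  obtain ⟨M, hMA, hM⟩ := exists_isMinimal_subset hcompl
  have mem_of_insert {x : Fin n} (hx : Γ (insert x A)) : x ∈ M := by
    obtain ⟨y, hy⟩ := inter_nonempty_of_authorized hmono hnc hx hM.1
    have hyA : y ∉ A := mem_compl.1 (hMA (mem_of_mem_inter_right hy))
    grind
  exact hpq M hM (mem_of_insert hp) (mem_of_insert hq)

end AccessStructures

section SecretSharing

open Real

variable {n : ℕ}

theorem insert_zero_posOf (A : Finset (Fin n)) : insert 0 (posOf A) = (posOf Aᶜ)ᶜ := by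
  ext i
  cases i using Fin.cases <;> simp [posOf]

theorem posOf_union (A B : Finset (Fin n)) : posOf (A ∪ B) = posOf A ∪ posOf B :=
  image_union A B

theorem posOf_subset_posOf {A B : Finset (Fin n)} (h : A ⊆ B) : posOf A ⊆ posOf B :=
  image_subset_image h

theorem disjoint_posOf {A B : Finset (Fin n)} : Disjoint (posOf A) (posOf B) ↔ Disjoint A B :=
  disjoint_image (Fin.succ_injective n)

theorem zero_notMem_posOf (A : Finset (Fin n)) : 0 ∉ posOf A := by
  simp [posOf]

theorem disjoint_posOf_insert_zero {A B : Finset (Fin n)} (h : Disjoint A B) :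
    Disjoint (posOf A) (insert 0 (posOf B)) :=
  disjoint_insert_right.2 ⟨zero_notMem_posOf A, disjoint_posOf.2 h⟩

theorem sent_insert_zero_posOf (ψ : (Fin (n + 1) → Fin 2) → ℂ) (A : Finset (Fin n)) :
    Sent ψ (insert 0 (posOf A)) = Sent ψ (posOf Aᶜ) := by
  rw [insert_zero_posOf, sent_compl]

namespace IsPureQSSState

variable {Γ : Finset (Fin n) → Prop} {ψ : (Fin (n + 1) → Fin 2) → ℂ} {A B C : Finset (Fin n)}

theorem sent_reference (hψ : IsPureQSSState Γ ψ) (hnc : NoCloning Γ) :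
    Sent ψ {0} = log 2 := by
  obtain ⟨A, hA⟩ : ∃ A, Γ A := by
    by_contra! h
    exact h ∅ ((hnc ∅).2 (h _))
  have hrecover := hψ.recover A hA
  have hsecrecy := hψ.secrecy Aᶜ ((hnc A).1 hA)
  rw [sent_insert_zero_posOf] at hrecover hsecrecy
  rw [compl_compl] at hsecrecy
  linarith

theorem sent_compl_of_authorized (hψ : IsPureQSSState Γ ψ) (hnc : NoCloning Γ) (hA : Γ A) :
    Sent ψ (posOf Aᶜ) = Sent ψ (posOf A) - log 2 := by
  have hrecover := hψ.recover A hA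
  rw [sent_insert_zero_posOf, hψ.sent_reference hnc] at hrecover
  linarith

theorem sent_le_card_mul_log_two (hψ : IsPureQSSState Γ ψ) (A : Finset (Fin n)) :
    Sent ψ (posOf A) ≤ A.card * log 2 := by
  have h := _root_.sent_le_card_mul_log_two hψ.normalized (posOf A)
  rwa [posOf, card_image_of_injective A (Fin.succ_injective n)] at h

theorem sent_union_le (hψ : IsPureQSSState Γ ψ) (hAB : Disjoint A B) :
    Sent ψ (posOf (A ∪ B)) ≤ Sent ψ (posOf A) + Sent ψ (posOf B) := by
  rw [posOf_union]
  exact _root_.sent_union_le hψ.normalized (disjoint_posOf.2 hAB)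

theorem sent_singleton_and_factorizes (hψ : IsPureQSSState Γ ψ) (hmono : Monotonic Γ)
    (hnc : NoCloning Γ) (hA : Γ A) (hB : Γ B) {j : Fin n} (hAB : A ∩ B = {j}) :
    Sent ψ (posOf {j}) = log 2 ∧ Factorizes ψ (posOf {j}) (posOf Aᶜ) := by
  have hj : j ∈ A := mem_of_mem_inter_left (hAB ▸ mem_singleton_self j)
  have hdisj : Disjoint {j} Aᶜ := by simpa using hj
  have hunionA : {j} ∪ A.erase j = A := by rw [← insert_eq, insert_erase hj]
  have hcompl : (A.erase j)ᶜ = {j} ∪ Aᶜ := by rw [compl_erase, insert_eq]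
  have hauth : Γ (A.erase j)ᶜ := hmono B _ hB fun x hx => by
    have hx' : x ∈ A → x = j := fun hxA => mem_singleton.1 (hAB ▸ mem_inter.2 ⟨hxA, hx⟩)
    grind [mem_compl]
  have hle_log : Sent ψ (posOf {j}) ≤ log 2 := by simpa using hψ.sent_le_card_mul_log_two {j}
  have hleA : Sent ψ (posOf A) ≤ Sent ψ (posOf {j}) + Sent ψ (posOf (A.erase j)) := by
    simpa only [hunionA] using hψ.sent_union_le (A := {j}) (B := A.erase j) (by simp)
  have hleU := hψ.sent_union_le hdisj
  have heqA := hψ.sent_compl_of_authorized hnc hA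
  have heqU := hψ.sent_compl_of_authorized hnc hauth
  rw [compl_compl, hcompl] at heqU
  refine ⟨by linarith, ?_⟩
  rw [← sent_union_eq_add_iff hψ.normalized (disjoint_posOf.2 hdisj), ← posOf_union]
  linarith

theorem sent_insert (hψ : IsPureQSSState Γ ψ) (hmono : Monotonic Γ)
    (hnc : NoCloning Γ) (hA : Γ A) (hB : Γ B) {j : Fin n} (hAB : A ∩ B = {j})
    (hAC : Disjoint A C) : Sent ψ (posOf (insert j C)) = log 2 + Sent ψ (posOf C) := by
  obtain ⟨hlog, hfac⟩ := hψ.sent_singleton_and_factorizes hmono hnc hA hB hAB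
  have hCA : C ⊆ Aᶜ := subset_compl_iff_disjoint_left.2 hAC
  have hj : Disjoint {j} Aᶜ := by
    simpa using mem_of_mem_inter_left (hAB ▸ mem_singleton_self j)
  rw [insert_eq, posOf_union, ← hlog,
    sent_union_eq_add_iff hψ.normalized (disjoint_posOf.2 (hj.mono_right hCA))]
  exact hfac.mono_right (disjoint_posOf.2 hj) (posOf_subset_posOf hCA)

theorem authorized_of_factorizes (hψ : IsPureQSSState Γ ψ) (hAB : Disjoint A B)
    (hfac : Factorizes ψ (posOf A) (insert 0 (posOf B))) (hunion : Γ (A ∪ B)) : Γ B := by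
  by_contra hB
  have hrecover := hψ.recover _ hunion
  have hsecrecy := hψ.secrecy B hB
  have hsplit := (sent_union_eq_add_iff hψ.normalized (disjoint_posOf_insert_zero hAB)).2 hfac
  rw [union_insert, ← posOf_union] at hsplit
  linarith [hψ.sent_union_le hAB, log_pos one_lt_two]

end IsPureQSSState

end SecretSharing

section Quadrangle

variable {n : ℕ}

/-- The players form a complete quadrangle `a`, `b`, `c`, `d` with diagonal points `p`, `q`, `r`:
its six sides, which are six of the seven lines of a Fano plane, are authorized. -/
structure IsQuadrangle (Γ : Finset (Fin n) → Prop) (a b c d p q r : Fin n) : Prop where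
  nodup : [a, b, c, d, p, q, r].Nodup
  abp : Γ {a, b, p}
  cdp : Γ {c, d, p}
  acq : Γ {a, c, q}
  bdq : Γ {b, d, q}
  adr : Γ {a, d, r}
  bcr : Γ {b, c, r}

variable {Γ : Finset (Fin n) → Prop} {a b c d p q r : Fin n}

theorem eq_triple_of_card_eq_three {α : Type*} [DecidableEq α] {s : Finset α} (hs : s.card = 3)
    {x y z : α} (hx : x ∈ s) (hy : y ∈ s) (hz : z ∈ s) (hnodup : [x, y, z].Nodup) :
    s = {x, y, z} := by
  refine (eq_of_subset_of_card_le ?_ ?_).symm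
  · grind
  · rw [hs, card_eq_three.2 ⟨x, y, z, by grind⟩]

theorem exists_four_sides (hmono : Monotonic Γ) (hnc : NoCloning Γ) (hnr : NoRedundancy Γ)
    (hhom : ∀ A, IsMinimal Γ A → A.card = 3) (hpq : ∀ M, IsMinimal Γ M → p ∈ M → q ∉ M) :
    ∃ a b c d, [a, b, c, d, p, q].Nodup ∧
      Γ {a, b, p} ∧ Γ {c, d, p} ∧ Γ {a, c, q} ∧ Γ {b, d, q} := by
  obtain ⟨M, hM, hpM⟩ := hnr p
  obtain ⟨N, hN, hMN⟩ := exists_isMinimal_inter_eq_singleton hmono hnc hM hpM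
  obtain ⟨K, hK, hqK⟩ := hnr q
  obtain ⟨L, hL, hKL⟩ := exists_isMinimal_inter_eq_singleton hmono hnc hK hqK
  obtain ⟨a, ha⟩ := inter_nonempty_of_authorized hmono hnc hM.1 hK.1
  obtain ⟨b, hb⟩ := inter_nonempty_of_authorized hmono hnc hM.1 hL.1
  obtain ⟨c, hc⟩ := inter_nonempty_of_authorized hmono hnc hN.1 hK.1
  obtain ⟨d, hd⟩ := inter_nonempty_of_authorized hmono hnc hN.1 hL.1
  rw [mem_inter] at ha hb hc hd
  have hpN : p ∈ N := mem_of_mem_inter_right (hMN ▸ mem_singleton_self p)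
  have hqL : q ∈ L := mem_of_mem_inter_right (hKL ▸ mem_singleton_self q)
  have eq_p {x} (hxM : x ∈ M) (hxN : x ∈ N) : x = p :=
    mem_singleton.1 (hMN ▸ mem_inter.2 ⟨hxM, hxN⟩)
  have eq_q {x} (hxK : x ∈ K) (hxL : x ∈ L) : x = q :=
    mem_singleton.1 (hKL ▸ mem_inter.2 ⟨hxK, hxL⟩)
  have hqM := hpq M hM hpM
  have hqN := hpq N hN hpN
  have hpK : p ∉ K := fun hp => hpq K hK hp hqK
  have hpL : p ∉ L := fun hp => hpq L hL hp hqL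
  have hnodup : [a, b, c, d, p, q].Nodup := by
    simp only [List.nodup_cons, List.mem_cons, List.not_mem_nil, or_false, not_or,
      List.nodup_nil, and_true, not_false_eq_true]
    and_intros <;> grind
  refine ⟨a, b, c, d, hnodup, ?_, ?_, ?_, ?_⟩
  · exact eq_triple_of_card_eq_three (hhom M hM) ha.1 hb.1 hpM (by grind) ▸ hM.1
  · exact eq_triple_of_card_eq_three (hhom N hN) hc.1 hd.1 hpN (by grind) ▸ hN.1
  · exact eq_triple_of_card_eq_three (hhom K hK) ha.2 hc.2 hqK (by grind) ▸ hK.1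
  · exact eq_triple_of_card_eq_three (hhom L hL) hb.2 hd.2 hqL (by grind) ▸ hL.1

theorem eq_adr_or_eq_bcr {α : Type*} [DecidableEq α] {a b c d p q r : α} {E : Finset α}
    (hnodup : [a, b, c, d, p, q, r].Nodup) (hcard : E.card = 3) (hr : r ∈ E)
    (hpq : p ∈ E → q ∉ E) (habp : ({a, b, p} ∩ E).Nonempty) (hcdp : ({c, d, p} ∩ E).Nonempty)
    (hacq : ({a, c, q} ∩ E).Nonempty) (hbdq : ({b, d, q} ∩ E).Nonempty) :
    E = {a, d, r} ∨ E = {b, c, r} := by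
  obtain ⟨x, y, -, hxy⟩ := card_eq_two.1 (show (E.erase r).card = 2 by grind)
  obtain rfl : E = {r, x, y} := by rw [← hxy, insert_erase hr]
  simp only [Finset.Nonempty, mem_inter, mem_insert, mem_singleton] at habp hcdp hacq hbdq
  grind

theorem IsQuadrangle.authorized_bcd_and_acd (hQ : IsQuadrangle Γ a b c d p q r)
    (hmono : Monotonic Γ) (hnc : NoCloning Γ) (hpq : ∀ M, IsMinimal Γ M → p ∈ M → q ∉ M) :
    Γ {b, c, d} ∧ Γ {a, c, d} :=
  ⟨authorized_of_authorized_insert hmono hnc hpq (hmono _ _ hQ.cdp (by grind))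
      (hmono _ _ hQ.bdq (by grind)),
    authorized_of_authorized_insert hmono hnc hpq (hmono _ _ hQ.cdp (by grind))
      (hmono _ _ hQ.acq (by grind))⟩

theorem IsQuadrangle.sent_diagonal (hQ : IsQuadrangle Γ a b c d p q r) (hmono : Monotonic Γ)
    (hnc : NoCloning Γ) {ψ : (Fin (n + 1) → Fin 2) → ℂ} (hψ : IsPureQSSState Γ ψ) :
    Sent ψ (posOf {p, q, r}) = 3 * Real.log 2 := by
  have h := hQ.nodup
  have hp := hψ.sent_insert hmono hnc hQ.abp hQ.cdp (j := p) (C := {q, r}) (by grind)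
    (by grind [disjoint_left])
  have hq := hψ.sent_insert hmono hnc hQ.acq hQ.bdq (j := q) (C := {r}) (by grind)
    (by grind [disjoint_left])
  have hr := (hψ.sent_singleton_and_factorizes hmono hnc hQ.adr hQ.bcr (j := r) (by grind)).1
  linarith

end Quadrangle

section SevenPlayers

variable {Γ : Finset (Fin 7) → Prop} {ψ : (Fin (7 + 1) → Fin 2) → ℂ} {a b c d p q r : Fin 7}

theorem exists_isQuadrangle (hmono : Monotonic Γ) (hnc : NoCloning Γ) (hnr : NoRedundancy Γ)
    (hhom : ∀ A, IsMinimal Γ A → A.card = 3) (hpq : ∀ M, IsMinimal Γ M → p ∈ M → q ∉ M) :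
    ∃ a b c d r, IsQuadrangle Γ a b c d p q r := by
  obtain ⟨a, b, c, d, hnodup, habp, hcdp, hacq, hbdq⟩ :=
    exists_four_sides hmono hnc hnr hhom hpq
  obtain ⟨r, hr⟩ : ∃ r, r ∉ ({a, b, c, d, p, q} : Finset (Fin 7)) := by
    by_contra! h
    have hcard := card_le_six (a := a) (b := b) (c := c) (d := d) (e := p) (f := q)
    rw [eq_univ_iff_forall.2 h, card_fin] at hcard
    omega
  have hnodup : [a, b, c, d, p, q, r].Nodup := by grind
  have side_eq {E : Finset (Fin 7)} (hE : IsMinimal Γ E) (hrE : r ∈ E) :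
      E = {a, d, r} ∨ E = {b, c, r} :=
    have hmeet {A} (hA : Γ A) := inter_nonempty_of_authorized hmono hnc hA hE.1
    eq_adr_or_eq_bcr hnodup (hhom E hE) hrE (hpq E hE) (hmeet habp) (hmeet hcdp) (hmeet hacq)
      (hmeet hbdq)
  obtain ⟨E, hE, hrE⟩ := hnr r
  obtain ⟨F, hF, hEF⟩ := exists_isMinimal_inter_eq_singleton hmono hnc hE hrE
  have hne : E ≠ F := by
    rintro rfl
    have hcard := hhom E hE
    rw [inter_self] at hEF
    simp [hEF] at hcard
  have hrF : r ∈ F := mem_of_mem_inter_right (hEF ▸ mem_singleton_self r)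
  have hsides : Γ {a, d, r} ∧ Γ {b, c, r} := by
    rcases side_eq hE hrE with rfl | rfl <;> rcases side_eq hF hrF with rfl | rfl
    · exact absurd rfl hne
    · exact ⟨hE.1, hF.1⟩
    · exact ⟨hF.1, hE.1⟩
    · exact absurd rfl hne
  exact ⟨a, b, c, d, r, hnodup, habp, hcdp, hacq, hbdq, hsides.1, hsides.2⟩

theorem IsQuadrangle.compl_diagonal (hQ : IsQuadrangle Γ a b c d p q r) :
    ({p, q, r} : Finset (Fin 7))ᶜ = {a, b, c, d} := by
  have h := hQ.nodup
  refine (eq_of_subset_of_card_le ?_ ?_).symm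
  · grind [mem_compl]
  · rw [card_compl, Fintype.card_fin, card_eq_three.2 ⟨p, q, r, by grind⟩]
    grind

theorem IsQuadrangle.factorizes_vertex (hQ : IsQuadrangle Γ a b c d p q r)
    (hmono : Monotonic Γ) (hnc : NoCloning Γ) (hψ : IsPureQSSState Γ ψ) (hbcd : Γ {b, c, d}) :
    Factorizes ψ (posOf {a}) (insert 0 (posOf {b, c, d})) := by
  have h := hQ.nodup
  have hdisj := disjoint_posOf_insert_zero
    (show Disjoint {a} ({b, c, d} : Finset (Fin 7)) by grind [disjoint_left])
  rw [← sent_union_eq_add_iff hψ.normalized hdisj]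
  refine (sent_union_le hψ.normalized hdisj).antisymm ?_
  have hunion : Sent ψ (posOf {a} ∪ insert 0 (posOf {b, c, d})) = 3 * Real.log 2 := by
    rw [union_insert, ← posOf_union, ← insert_eq, sent_insert_zero_posOf, ← hQ.compl_diagonal,
      compl_compl, hQ.sent_diagonal hmono hnc hψ]
  have ha := hψ.sent_le_card_mul_log_two {a}
  have hbcd_le := hψ.sent_le_card_mul_log_two {b, c, d}
  have hbcd_eq := hψ.sent_compl_of_authorized hnc hbcd
  rw [card_singleton] at ha
  rw [card_eq_three.2 ⟨b, c, d, by grind⟩] at hbcd_le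
  rw [sent_insert_zero_posOf, hunion]
  push_cast at ha hbcd_le
  linarith

theorem IsQuadrangle.not_authorized_acd (hQ : IsQuadrangle Γ a b c d p q r)
    (hmono : Monotonic Γ) (hnc : NoCloning Γ) (hψ : IsPureQSSState Γ ψ) (hbcd : Γ {b, c, d}) :
    ¬ Γ {a, c, d} := by
  intro hacd
  have h := hQ.nodup
  have hdisj : Disjoint {a} ({b, c, d} : Finset (Fin 7)) := by grind [disjoint_left]
  have hcd : ({c, d} : Finset (Fin 7)) ⊆ {b, c, d} := subset_insert _ _
  have hfac : Factorizes ψ (posOf {a}) (insert 0 (posOf {c, d})) :=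
    (hQ.factorizes_vertex hmono hnc hψ hbcd).mono_right (disjoint_posOf_insert_zero hdisj)
      (insert_subset_insert 0 (posOf_subset_posOf hcd))
  have hauth : Γ {c, d} := hψ.authorized_of_factorizes (hdisj.mono_right hcd) hfac hacd
  obtain ⟨x, hx⟩ := inter_nonempty_of_authorized hmono hnc hQ.abp hauth
  grind

end SevenPlayers

theorem stmt19 (Γ : Finset (Fin 7) → Prop)
    (hmono : Monotonic Γ) (hnc : NoCloning Γ) (hnr : NoRedundancy Γ)
    (hhom : ∀ A : Finset (Fin 7), IsMinimal Γ A → A.card = 3)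
    (ψ : (Fin (7 + 1) → Fin 2) → ℂ) (hψ : IsPureQSSState Γ ψ) :
    ∀ P : Finset (Fin 7), P.card = 2 →
      ∃ A : Finset (Fin 7), IsMinimal Γ A ∧ P ⊆ A := by
  intro P hP
  obtain ⟨p, q, -, rfl⟩ := card_eq_two.1 hP
  by_contra! h
  have hpq : ∀ M, IsMinimal Γ M → p ∈ M → q ∉ M := fun M hM hp hq => h M hM (by grind)
  obtain ⟨a, b, c, d, r, hQ⟩ := exists_isQuadrangle hmono hnc hnr hhom hpq
  obtain ⟨hbcd, hacd⟩ := hQ.authorized_bcd_and_acd hmono hnc hpq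
  exact hQ.not_authorized_acd hmono hnc hψ hbcd hacd
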